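/- arXiv:1910.10976 — 7 statements merged into one kernel-verified Lean document; each statement's English description precedes it below -/
import Mathlib

section
/- Let S, J ⊆ {1,…,n} and let A ∈ ℝ^{m×n} satisfy the RIP of order |S ∪ J| with constant δ ∈ [0,1). Then for every x ∈ ℝ^n with supp(x) = S, one has (1 − δ)·‖x_{S\J}‖₂² ≤ ‖P_J^⊥ A x‖₂² ≤ (1 + δ)·‖x_{S\J}‖₂². -/
open Finset

noncomputable section

/-- The support of a vector as a `Finset`. -/
def vsupp {n : ℕ} (x : Fin n → ℝ) : Finset (Fin n) :=
  Finset.univ.filter (fun i => x i ≠ 0)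

/-- `A` satisfies the restricted isometry property of order `r` with constant `δ`. -/
def RIP {m n : ℕ} (A : Matrix (Fin m) (Fin n) ℝ) (r : ℕ) (δ : ℝ) : Prop :=
  ∀ x : Fin n → ℝ, (vsupp x).card ≤ r →
    (1 - δ) * (∑ i, x i ^ 2) ≤ (∑ i, (A.mulVec x) i ^ 2) ∧
      (∑ i, (A.mulVec x) i ^ 2) ≤ (1 + δ) * (∑ i, x i ^ 2)

/-- The `j`-th column of `A`. -/
def col {m n : ℕ} (A : Matrix (Fin m) (Fin n) ℝ) (j : Fin n) : Fin m → ℝ :=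
  fun i => A i j

/-- Euclidean dot product. -/
def dot {m : ℕ} (u v : Fin m → ℝ) : ℝ := ∑ i, u i * v i

/-- Squared Euclidean norm. -/
def nsq {m : ℕ} (v : Fin m → ℝ) : ℝ := ∑ i, v i ^ 2

/-- Euclidean norm. -/
def enorm {m : ℕ} (v : Fin m → ℝ) : ℝ := Real.sqrt (nsq v)

/-- Squared norm of the restriction of `x` to `T`. -/
def rsq {n : ℕ} (x : Fin n → ℝ) (T : Finset (Fin n)) : ℝ := ∑ i ∈ T, x i ^ 2

/-- Norm of the restriction of `x` to `T`. -/
def rnorm {n : ℕ} (x : Fin n → ℝ) (T : Finset (Fin n)) : ℝ := Real.sqrt (rsq x T)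

/-- Span of the columns of `A` indexed by `J`. -/
def colSpan {m n : ℕ} (A : Matrix (Fin m) (Fin n) ℝ) (J : Finset (Fin n)) :
    Submodule ℝ (EuclideanSpace ℝ (Fin m)) :=
  Submodule.span ℝ ((fun j => (WithLp.equiv 2 (Fin m → ℝ)).symm (col A j)) '' (J : Set (Fin n)))

/-- The projection `P_J^⊥ v` of `v` onto the orthogonal complement of the span of the
columns of `A` indexed by `J`. -/
def projPerp {m n : ℕ} (A : Matrix (Fin m) (Fin n) ℝ) (J : Finset (Fin n)) (v : Fin m → ℝ) :
    Fin m → ℝ :=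
  v - WithLp.equiv 2 (Fin m → ℝ)
    ((Submodule.orthogonalProjectionOnto (colSpan A J) ((WithLp.equiv 2 (Fin m → ℝ)).symm v) :
      EuclideanSpace ℝ (Fin m)))

/-- The OLS selection criterion value for index `j`, given measurements `y` and current
estimated support `Sk`. -/
def olsQuot {m n : ℕ} (A : Matrix (Fin m) (Fin n) ℝ) (y : Fin m → ℝ) (Sk : Finset (Fin n))
    (j : Fin n) : ℝ :=
  |dot (projPerp A Sk y) (col A j)| / _root_.enorm (projPerp A Sk (col A j))

/-- The estimated support of OLS after `k` iterations (ties broken towards smaller index). -/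
def olsSupp {m n : ℕ} (A : Matrix (Fin m) (Fin n) ℝ) (y : Fin m → ℝ) : ℕ → Finset (Fin n)
  | 0 => ∅
  | k + 1 =>
    let Sk := olsSupp A y k
    let cand := (Finset.univ \ Sk).filter
      (fun j => ∀ i ∈ Finset.univ \ Sk, olsQuot A y Sk i ≤ olsQuot A y Sk j)
    if h : cand.Nonempty then insert (cand.min' h) Sk else Sk

/-- The constant `C_K` from the paper. -/
def CK (K : ℕ) : ℝ :=
  if K = 1 then 1 else if K = 2 then 2/3 else if K = 3 then 4/7 else 1 / Real.sqrt K

theorem nsq_toLp {m : ℕ} (v : Fin m → ℝ) :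
    nsq v = ‖((WithLp.equiv 2 (Fin m → ℝ)).symm v : EuclideanSpace ℝ (Fin m))‖ ^ 2 := by
  rw [EuclideanSpace.real_norm_sq_eq]; rfl

theorem mem_colSpan_of {m n : ℕ} (A : Matrix (Fin m) (Fin n) ℝ) (J : Finset (Fin n))
    (c : Fin n → ℝ) (hc : ∀ i, i ∉ J → c i = 0) :
    ((WithLp.equiv 2 (Fin m → ℝ)).symm (A.mulVec c)) ∈ colSpan A J := by
  have h : ((WithLp.equiv 2 (Fin m → ℝ)).symm (A.mulVec c))
      = ∑ j, c j • ((WithLp.equiv 2 (Fin m → ℝ)).symm (col A j)) := by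
    ext i
    simp [Matrix.mulVec, dotProduct, col, mul_comm]
  rw [h]
  refine Submodule.sum_mem _ fun j _ => ?_
  by_cases hj : j ∈ J
  · exact Submodule.smul_mem _ _ (Submodule.subset_span ⟨j, hj, rfl⟩)
  · rw [hc j hj, zero_smul]; exact Submodule.zero_mem _

theorem exists_of_mem_colSpan {m n : ℕ} (A : Matrix (Fin m) (Fin n) ℝ) (J : Finset (Fin n))
    (u : EuclideanSpace ℝ (Fin m)) (hu : u ∈ colSpan A J) :
    ∃ c : Fin n → ℝ, (∀ i, i ∉ J → c i = 0) ∧ WithLp.equiv 2 (Fin m → ℝ) u = A.mulVec c := by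
  unfold colSpan at hu
  induction hu using Submodule.span_induction with
  | mem v hv =>
    obtain ⟨j, hj, rfl⟩ := hv
    refine ⟨Pi.single j 1, fun i hi => ?_, ?_⟩
    · have : i ≠ j := fun h => hi (h ▸ hj)
      simp [this]
    · ext i; simp [col]
  | zero => exact ⟨0, by simp, by ext i; simp⟩
  | add v w _ _ hv hw =>
    obtain ⟨c, hc, h1⟩ := hv
    obtain ⟨d, hd, h2⟩ := hw
    refine ⟨c + d, fun i hi => by simp [hc i hi, hd i hi], ?_⟩
    rw [Matrix.mulVec_add, ← h1, ← h2]; rfl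
  | smul a v _ hv =>
    obtain ⟨c, hc, h1⟩ := hv
    refine ⟨a • c, fun i hi => by simp [hc i hi], ?_⟩
    rw [Matrix.mulVec_smul, ← h1]; rfl

theorem nsq_projPerp_le {m n : ℕ} (A : Matrix (Fin m) (Fin n) ℝ) (J : Finset (Fin n))
    (v : Fin m → ℝ) (w : Fin m → ℝ)
    (hw : ((WithLp.equiv 2 (Fin m → ℝ)).symm w) ∈ colSpan A J) :
    nsq (projPerp A J v) ≤ nsq (v - w) := by
  rw [nsq_toLp, nsq_toLp]
  refine pow_le_pow_left₀ (norm_nonneg _) ?_ 2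
  have h := Submodule.starProjection_minimal (U := colSpan A J)
    ((WithLp.equiv 2 (Fin m → ℝ)).symm v)
  have h2 := ciInf_le (f := fun x : colSpan A J =>
    ‖((WithLp.equiv 2 (Fin m → ℝ)).symm v : EuclideanSpace ℝ (Fin m)) - x‖)
    ⟨0, by rintro _ ⟨_, rfl⟩; positivity⟩ ⟨_, hw⟩
  exact h.le.trans h2

/-- modified RIP of a projected matrix: if `A` satisfies the RIP of order
`|S ∪ J|` with constant `δ ∈ [0,1)`, then for every `x` with support `S`,
`(1 − δ)‖x_{S\J}‖₂² ≤ ‖P_J^⊥ A x‖₂² ≤ (1 + δ)‖x_{S\J}‖₂²`. -/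
theorem stmt0 {m n : ℕ} (A : Matrix (Fin m) (Fin n) ℝ) (S J : Finset (Fin n)) (δ : ℝ)
    (hδ0 : 0 ≤ δ) (hδ1 : δ < 1) (hRIP : RIP A (S ∪ J).card δ)
    (x : Fin n → ℝ) (hx : vsupp x = S) :
    (1 - δ) * rsq x (S \ J) ≤ nsq (projPerp A J (A.mulVec x)) ∧
      nsq (projPerp A J (A.mulVec x)) ≤ (1 + δ) * rsq x (S \ J) := by
  constructor
  · obtain ⟨c, hc, h⟩ := exists_of_mem_colSpan A J _
      (Submodule.orthogonalProjectionOnto (colSpan A J)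
        ((WithLp.equiv 2 (Fin m → ℝ)).symm (A.mulVec x))).2
    have hp : projPerp A J (A.mulVec x) = A.mulVec (x - c) := by
      rw [Matrix.mulVec_sub, ← h]; rfl
    rw [hp]
    refine le_trans ?_ (hRIP (x - c) (Finset.card_le_card ?_)).1
    · refine mul_le_mul_of_nonneg_left ?_ (by linarith)
      have : rsq x (S \ J) = ∑ i ∈ S \ J, (x - c) i ^ 2 := by
        refine Finset.sum_congr rfl fun i hi => ?_
        simp [hc i (Finset.mem_sdiff.1 hi).2]
      rw [this]
      exact Finset.sum_le_sum_of_subset_of_nonneg (Finset.subset_univ _)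
        fun _ _ _ => sq_nonneg _
    · intro i hi
      by_contra hn
      rw [Finset.mem_union, not_or, ← hx] at hn
      have h1 : x i = 0 := by simpa [vsupp] using hn.1
      simp [vsupp, h1, hc i hn.2] at hi
  · set d : Fin n → ℝ := fun i => if i ∈ J then x i else 0 with hd
    have hx0 : ∀ i, i ∉ S → x i = 0 := fun i hi => by
      rw [← hx] at hi; simpa [vsupp] using hi
    have h1 := nsq_projPerp_le A J (A.mulVec x) _
      (mem_colSpan_of A J d (fun i hi => by simp [hd, hi]))
    rw [← Matrix.mulVec_sub] at h1
    refine h1.trans ((hRIP (x - d) (Finset.card_le_card ?_)).2.trans (le_of_eq ?_))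
    · intro i hi
      by_contra hn
      rw [Finset.mem_union, not_or] at hn
      simp [vsupp, hx0 i hn.1, hd] at hi
    · congr 1
      unfold rsq
      symm
      rw [← Finset.sum_subset (Finset.subset_univ (S \ J))]
      · refine Finset.sum_congr rfl fun i hi => ?_
        simp [hd, (Finset.mem_sdiff.1 hi).2]
      · intro i _ hi
        by_cases hj : i ∈ J
        · simp [hd, hj]
        · have : i ∉ S := fun h => hi (Finset.mem_sdiff.2 ⟨h, hj⟩)
          simp [hd, hx0 i this]
end
end

section
/- Let A ∈ ℝ^{m×n} satisfy the RIP of order K+1 with constant δ ∈ [0,1). Let x ∈ ℝ^n be K-sparse with support S = supp(x), let S' be a proper subset of S, set r = P_{S'}^⊥ A x, let j ∈ {1,…,n} \ S with P_{S'}^⊥ a_j ≠ 0, and put t = ‖x_{S\S'}‖₂ · |⟨r, a_j⟩| / ‖P_{S'}^⊥ a_j‖₂. Then ‖r‖₂² − 2t ≥ (1 − (1 + ‖P_{S'}^⊥ a_j‖₂²)·δ) · ‖x_{S\S'}‖₂² / ‖P_{S'}^⊥ a_j‖₂². -/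
open Finset

noncomputable section

lemma projPerp_eq_aux {m n : ℕ} (A : Matrix (Fin m) (Fin n) ℝ) (J : Finset (Fin n))
    (v : Fin m → ℝ) : ∃ w : Fin n → ℝ, (∀ i, i ∉ J → w i = 0) ∧
      projPerp A J v = v - A.mulVec w := by
  classical
  have h := (Submodule.orthogonalProjectionOnto (colSpan A J)
    ((WithLp.equiv 2 (Fin m → ℝ)).symm v)).2
  unfold colSpan at h
  rw [Submodule.mem_span_image_finset_iff_exists_fun'] at h
  obtain ⟨c, hc⟩ := h
  refine ⟨fun i => if i ∈ J then c i else 0, fun i hi => by simp [hi], ?_⟩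
  unfold projPerp
  congr 1
  unfold colSpan
  rw [← hc]
  ext i
  simp [Matrix.mulVec, dotProduct, col, mul_comm]

lemma dot_projPerp_aux {m n : ℕ} (A : Matrix (Fin m) (Fin n) ℝ) (J : Finset (Fin n))
    (u v : Fin m → ℝ) :
    dot (projPerp A J u) (projPerp A J v) = dot (projPerp A J u) v := by
  have h := Submodule.starProjection_inner_eq_zero (K := colSpan A J)
    ((WithLp.equiv 2 (Fin m → ℝ)).symm u) _
    (Submodule.orthogonalProjectionOnto (colSpan A J)
    ((WithLp.equiv 2 (Fin m → ℝ)).symm v)).2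
  have h2 : dot (projPerp A J u) (v - projPerp A J v) = 0 := by
    rw [← h, PiLp.inner_apply]
    simp only [dot, projPerp]
    refine Finset.sum_congr rfl fun i _ => ?_
    simp [mul_comm]
  simp only [dot, Pi.sub_apply, mul_sub, Finset.sum_sub_distrib] at h2 ⊢
  linarith

lemma key_aux {m n K : ℕ} (A : Matrix (Fin m) (Fin n) ℝ) (δ : ℝ)
    (hδ1 : δ < 1) (hRIP : RIP A (K + 1) δ)
    (x : Fin n → ℝ) (S : Finset (Fin n)) (hS : vsupp x = S) (hK : S.card ≤ K)
    (S' : Finset (Fin n)) (hS' : S' ⊂ S) (j : Fin n) (hj : j ∉ S) (c : ℝ) :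
    (1 - δ) * (rsq x (S \ S') + c ^ 2) ≤ nsq (projPerp A S' (A.mulVec x))
      + 2 * c * dot (projPerp A S' (A.mulVec x)) (col A j)
      + c ^ 2 * nsq (projPerp A S' (col A j)) := by
  classical
  obtain ⟨w, hw, hw'⟩ := projPerp_eq_aux A S' (A.mulVec x)
  obtain ⟨q, hq, hq'⟩ := projPerp_eq_aux A S' (col A j)
  have hx : ∀ i, i ∉ S → x i = 0 := by
    intro i hi
    rw [← hS] at hi
    simpa [vsupp] using hi
  set z : Fin n → ℝ := x - w + c • (Pi.single j 1 - q) with hz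
  have hAz : A.mulVec z = projPerp A S' (A.mulVec x) + c • projPerp A S' (col A j) := by
    rw [hz, hw', hq', Matrix.mulVec_add, Matrix.mulVec_smul, Matrix.mulVec_sub, Matrix.mulVec_sub,
      Matrix.mulVec_single_one]
    rfl
  have hsub : vsupp z ⊆ insert j S := by
    intro i hi
    by_contra hn
    simp only [Finset.mem_insert, not_or] at hn
    have h1 : i ∉ S' := fun h => hn.2 (hS'.1 h)
    simp [vsupp, hz, hx i hn.2, hw i h1, hq i h1, hn.1] at hi
  have hcard : (vsupp z).card ≤ K + 1 :=
    (Finset.card_le_card hsub).trans ((Finset.card_insert_le _ _).trans (by omega))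
  have h1 := (hRIP z hcard).1
  have h2 : rsq x (S \ S') + c ^ 2 ≤ ∑ i, z i ^ 2 := by
    have h3 : ∑ i ∈ insert j (S \ S'), z i ^ 2 ≤ ∑ i, z i ^ 2 :=
      Finset.sum_le_sum_of_subset_of_nonneg (Finset.subset_univ _) (fun _ _ _ => sq_nonneg _)
    rw [Finset.sum_insert (by simp [hj])] at h3
    have hj' : j ∉ S' := fun h => hj (hS'.1 h)
    have h4 : z j = c := by simp [hz, hx j hj, hw j hj', hq j hj']
    have h5 : ∑ i ∈ S \ S', z i ^ 2 = rsq x (S \ S') := by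
      refine Finset.sum_congr rfl fun i hi => ?_
      rw [Finset.mem_sdiff] at hi
      have hij : i ≠ j := fun h => hj (h ▸ hi.1)
      simp [hz, hw i hi.2, hq i hi.2, hij]
    rw [h4, h5] at h3
    linarith
  have h6 : ∑ i, (A.mulVec z) i ^ 2 = nsq (projPerp A S' (A.mulVec x))
      + 2 * c * dot (projPerp A S' (A.mulVec x)) (col A j)
      + c ^ 2 * nsq (projPerp A S' (col A j)) := by
    rw [hAz, ← dot_projPerp_aux]
    simp only [nsq, dot, Finset.mul_sum, ← Finset.sum_add_distrib]
    refine Finset.sum_congr rfl fun i _ => ?_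
    simp only [Pi.add_apply, Pi.smul_apply, smul_eq_mul]
    ring
  rw [← h6]
  exact (mul_le_mul_of_nonneg_left h2 (by linarith)).trans h1

/-- under RIP of order `K+1` with `δ ∈ [0,1)`, with
`t = ‖x_{S\S'}‖₂ |⟨r, a_j⟩| / ‖P_{S'}^⊥ a_j‖₂`, one has
`‖r‖₂² − 2t ≥ (1 − (1 + ‖P_{S'}^⊥ a_j‖₂²) δ) ‖x_{S\S'}‖₂² / ‖P_{S'}^⊥ a_j‖₂²`. -/
theorem stmt2 {m n K : ℕ} (A : Matrix (Fin m) (Fin n) ℝ) (δ : ℝ)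
    (hδ0 : 0 ≤ δ) (hδ1 : δ < 1)
    (hRIP : RIP A (K + 1) δ)
    (x : Fin n → ℝ) (S : Finset (Fin n)) (hS : vsupp x = S) (hK : S.card ≤ K)
    (S' : Finset (Fin n)) (hS' : S' ⊂ S)
    (r : Fin m → ℝ) (hr : r = projPerp A S' (A.mulVec x))
    (j : Fin n) (hj : j ∉ S) (hproj : projPerp A S' (col A j) ≠ 0)
    (t : ℝ) (ht : t = rnorm x (S \ S') * |dot r (col A j)| / _root_.enorm (projPerp A S' (col A j))) :
    nsq r - 2 * t ≥
      (1 - (1 + nsq (projPerp A S' (col A j))) * δ) * rsq x (S \ S') /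
        nsq (projPerp A S' (col A j)) := by
  have hN : 0 < nsq (projPerp A S' (col A j)) := by
    obtain ⟨i, hi⟩ := Function.ne_iff.mp hproj
    exact Finset.sum_pos' (fun _ _ => sq_nonneg _) ⟨i, Finset.mem_univ i, sq_pos_of_ne_zero hi⟩
  have hX : 0 ≤ rsq x (S \ S') := Finset.sum_nonneg fun _ _ => sq_nonneg _
  have key := fun c => key_aux A δ hδ1 hRIP x S hS hK S' hS' j hj c
  rw [← hr] at key
  unfold rnorm _root_.enorm at ht
  set N := nsq (projPerp A S' (col A j))
  set X := rsq x (S \ S')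
  set d := dot r (col A j)
  have hsN : 0 < Real.sqrt N := Real.sqrt_pos.mpr hN
  have hc2 : (Real.sqrt X / Real.sqrt N) ^ 2 = X / N := by
    rw [div_pow, Real.sq_sqrt hX, Real.sq_sqrt hN.le]
  have hfin : (1 - δ) * (X + X / N) ≤ nsq r - 2 * t + X / N * N := by
    rcases le_total 0 d with hd | hd
    · have := key (-(Real.sqrt X / Real.sqrt N))
      rw [neg_sq, hc2] at this
      rw [ht, abs_of_nonneg hd]
      convert this using 2
      ring
    · have := key (Real.sqrt X / Real.sqrt N)
      rw [hc2] at this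
      rw [ht, abs_of_nonpos hd]
      convert this using 2
      ring
  rw [div_mul_cancel₀ _ hN.ne'] at hfin
  have : (1 - (1 + N) * δ) * X / N = (1 - δ) * (X + X / N) - X := by
    field_simp
    ring
  rw [this]
  linarith
end
end

section
/- Let A ∈ ℝ^{m×n} have unit ℓ₂-norm columns and satisfy the RIP of order K+1 with constant δ ≤ 1/2. Let x ∈ ℝ^n be K-sparse with support S = supp(x), let S' be a proper subset of S, set r = P_{S'}^⊥ A x, let j ∈ {1,…,n} \ S, and put t = ‖x_{S\S'}‖₂ · |⟨r, a_j⟩| / ‖P_{S'}^⊥ a_j‖₂. Then 2t ≤ (1 + ‖P_{S'}^⊥ a_j‖₂²) · δ · ‖r‖₂². -/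
open Finset

noncomputable section

lemma aux_real (δ e ρ c : ℝ) (h0 : 0 ≤ δ) (h1 : δ ≤ 1/2) (e0 : 0 ≤ e) (e1 : e ≤ δ)
    (hρ : 1 - δ ≤ ρ)
    (f1 : c^2 ≤ (ρ - 1 + δ) * (δ - e)) (f2 : c^2 ≤ (1 + δ - ρ) * (δ + e)) :
    c^2 ≤ ((1-e)*(1-e/2)^2) * δ^2 * ρ^2 := by
  obtain ⟨g, hg⟩ : ∃ g, g = (1-e)*(1-e/2)^2 := ⟨_, rfl⟩
  rw [← hg]
  have g0 : 0 ≤ g := by rw [hg]; exact mul_nonneg (by linarith) (sq_nonneg _)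
  have gl : 1 - 2*e ≤ g := by rw [hg]; nlinarith [mul_nonneg e0 e0, mul_nonneg (mul_nonneg e0 e0) (by linarith : (0:ℝ) ≤ 1 - e)]
  have key : δ^2 - e^2 ≤ g * δ^2 * (1+e)^2 := by
    have : g * (1+e)^2 = (1-e^2)*(1 - 3*e^2/4 + e^3/4) := by rw [hg]; ring
    have h2 : 1 - 2*e^2 ≤ g * (1+e)^2 := by
      rw [this]
      have : 0 ≤ e^2 * (1/4 + 3*e^2/4 + e/4*(1-e^2)) := by
        apply mul_nonneg (sq_nonneg e)
        have : e^2 ≤ 1 := by nlinarith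
        have : 0 ≤ e/4*(1-e^2) := mul_nonneg (by linarith) (by linarith)
        positivity
      nlinarith
    have h3 : δ^2 ≤ 1/4 := by nlinarith
    nlinarith [mul_le_mul_of_nonneg_left h2 (sq_nonneg δ), mul_nonneg (sq_nonneg e) (by linarith : 0 ≤ 1/4 - δ^2), sq_nonneg e]
  have a0 : 0 ≤ g * δ^2 := by positivity
  -- discriminant argument
  have disc : δ - e ≤ 4 * (g * δ^2) * (1 - δ) → c^2 ≤ g * δ^2 * ρ^2 := by
    intro hd
    refine f1.trans ?_
    rcases a0.eq_or_lt with h | h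
    · rw [← h] at hd ⊢
      have : δ - e = 0 := by linarith
      rw [this]; simp
    · obtain ⟨a, ha⟩ : ∃ a, a = g * δ^2 := ⟨_, rfl⟩
      rw [← ha] at hd h ⊢
      obtain ⟨b, hb⟩ : ∃ b, b = δ - e := ⟨_, rfl⟩
      have b0 : 0 ≤ b := by linarith
      rw [← hb] at hd ⊢
      have : 0 ≤ 4 * a * (a*ρ^2 - (ρ - 1 + δ) * b) := by
        nlinarith [sq_nonneg (2*a*ρ - b), mul_nonneg b0 (by linarith : 0 ≤ 4*a*(1-δ) - b)]
      have := nonneg_of_mul_nonneg_right this (by linarith)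
      linarith
  rcases le_total (1+e) ρ with hA | hA
  · have : (1 + δ - ρ) * (δ + e) ≤ δ^2 - e^2 := by nlinarith
    have h4 : g * δ^2 * (1+e)^2 ≤ g * δ^2 * ρ^2 := by gcongr
    linarith
  · rcases le_total (1 - 2*δ) e with hB | hB
    · apply disc
      have h5 : 4 * ((1-2*e) * δ^2) * (1 - δ) ≤ 4 * (g * δ^2) * (1 - δ) := by
        have : 0 ≤ 1 - δ := by linarith
        gcongr
      refine le_trans ?_ h5
      have : 0 ≤ (1-2*δ) * (e*(1+2*δ-4*δ^2) - δ*(1-2*δ)) := by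
        apply mul_nonneg (by linarith)
        have : 1 ≤ 1+2*δ-4*δ^2 := by nlinarith
        nlinarith
      nlinarith
    · rcases le_total (2 * (g*δ^2) * (1+e)) (δ - e) with hC | hC
      · refine f1.trans ?_
        nlinarith [mul_nonneg (by linarith : 0 ≤ 1+e-ρ) (by linarith : 0 ≤ (δ - e) - 2 * (g*δ^2) * (1+e)), mul_nonneg a0 (sq_nonneg (1+e-ρ))]
      · apply disc
        nlinarith [mul_nonneg a0 (by linarith : 0 ≤ 1 - 2*δ - e)]

lemma quad_disc (u c v : ℝ) (h : ∀ a : ℝ, 0 ≤ u*a^2 + 2*c*a + v) : c^2 ≤ u*v := by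
  have := discrim_le_zero (a := u) (b := 2*c) (c := v) (fun a => by have := h a; nlinarith)
  unfold discrim at this
  nlinarith

lemma nsq_eq {m : ℕ} (v : Fin m → ℝ) : nsq v = v ⬝ᵥ v := by
  simp [nsq, dotProduct, sq]

lemma mem_colSpan {m n : ℕ} (A : Matrix (Fin m) (Fin n) ℝ) (J : Finset (Fin n))
    (v : EuclideanSpace ℝ (Fin m)) (hv : v ∈ colSpan A J) :
    ∃ z : Fin n → ℝ, (∀ i ∉ J, z i = 0) ∧ WithLp.equiv 2 (Fin m → ℝ) v = A.mulVec z := by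
  unfold colSpan at hv
  induction hv using Submodule.span_induction with
  | mem v hv =>
    obtain ⟨k, hk, rfl⟩ := hv
    refine ⟨Pi.single k 1, fun i hi => ?_, ?_⟩
    · have : i ≠ k := by rintro rfl; exact hi hk
      simp [this]
    · ext i
      simp [col]
  | zero => exact ⟨0, fun _ _ => rfl, by ext; simp⟩
  | add u v _ _ hu hv =>
    obtain ⟨z, h1, h2⟩ := hu
    obtain ⟨w, h3, h4⟩ := hv
    refine ⟨z + w, fun i hi => by simp [h1 i hi, h3 i hi], ?_⟩
    rw [Matrix.mulVec_add, ← h2, ← h4]; rfl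
  | smul a u _ hu =>
    obtain ⟨z, h1, h2⟩ := hu
    refine ⟨a • z, fun i hi => by simp [h1 i hi], ?_⟩
    rw [Matrix.mulVec_smul, ← h2]; rfl

lemma projPerp_eq {m n : ℕ} (A : Matrix (Fin m) (Fin n) ℝ) (J : Finset (Fin n)) (v : Fin m → ℝ) :
    ∃ z : Fin n → ℝ, (∀ i ∉ J, z i = 0) ∧ projPerp A J v = v - A.mulVec z := by
  obtain ⟨z, h1, h2⟩ := mem_colSpan A J _
    (Submodule.orthogonalProjectionOnto (colSpan A J) ((WithLp.equiv 2 (Fin m → ℝ)).symm v)).2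
  exact ⟨z, h1, by rw [projPerp, h2]⟩

lemma projPerp_col {m n : ℕ} (A : Matrix (Fin m) (Fin n) ℝ) (J : Finset (Fin n)) (v : Fin m → ℝ)
    (k : Fin n) (hk : k ∈ J) : projPerp A J v ⬝ᵥ col A k = 0 := by
  have h := Submodule.starProjection_inner_eq_zero (K := colSpan A J)
    ((WithLp.equiv 2 (Fin m → ℝ)).symm v) ((WithLp.equiv 2 (Fin m → ℝ)).symm (col A k))
    (Submodule.subset_span ⟨k, hk, rfl⟩)
  rw [EuclideanSpace.inner_eq_star_dotProduct] at h
  rw [dotProduct_comm]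
  simpa [projPerp] using h

lemma projPerp_orth {m n : ℕ} (A : Matrix (Fin m) (Fin n) ℝ) (J : Finset (Fin n)) (v : Fin m → ℝ)
    (z : Fin n → ℝ) (hz : ∀ i ∉ J, z i = 0) : projPerp A J v ⬝ᵥ A.mulVec z = 0 := by
  rw [Matrix.dotProduct_mulVec]
  simp only [dotProduct]
  apply Finset.sum_eq_zero
  intro k _
  by_cases hk : k ∈ J
  · have := projPerp_col A J v k hk
    simp only [Matrix.vecMul]
    have h2 : (projPerp A J v ⬝ᵥ fun i => A i k) = 0 := this
    rw [h2, zero_mul]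
  · rw [hz k hk, mul_zero]

/-- under unit-norm columns and RIP of order `K+1` with `δ ≤ 1/2`,
with `t = ‖x_{S\S'}‖₂ |⟨r, a_j⟩| / ‖P_{S'}^⊥ a_j‖₂`, one has
`2t ≤ (1 + ‖P_{S'}^⊥ a_j‖₂²) δ ‖r‖₂²`. -/
theorem stmt4 {m n K : ℕ} (A : Matrix (Fin m) (Fin n) ℝ) (δ : ℝ)
    (hδ0 : 0 ≤ δ) (hδ : δ ≤ 1 / 2)
    (hcols : ∀ j, nsq (col A j) = 1)
    (hRIP : RIP A (K + 1) δ)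
    (x : Fin n → ℝ) (S : Finset (Fin n)) (hS : vsupp x = S) (hK : S.card ≤ K)
    (S' : Finset (Fin n)) (hS' : S' ⊂ S)
    (r : Fin m → ℝ) (hr : r = projPerp A S' (A.mulVec x))
    (j : Fin n) (hj : j ∉ S)
    (t : ℝ) (ht : t = rnorm x (S \ S') * |dot r (col A j)| / _root_.enorm (projPerp A S' (col A j))) :
    2 * t ≤ (1 + nsq (projPerp A S' (col A j))) * δ * nsq r := by
  set p := projPerp A S' (col A j) with hp
  have hjS' : j ∉ S' := fun h => hj (hS'.1 h)
  obtain ⟨z1, hz1, e1⟩ := projPerp_eq A S' (A.mulVec x)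
  obtain ⟨z2, hz2, e2⟩ := projPerp_eq A S' (col A j)
  rw [← hr] at e1
  rw [← hp] at e2
  have or : ∀ z : Fin n → ℝ, (∀ i ∉ S', z i = 0) → r ⬝ᵥ A.mulVec z = 0 := by
    rw [hr]; exact projPerp_orth A S' _
  have op : ∀ z : Fin n → ℝ, (∀ i ∉ S', z i = 0) → p ⬝ᵥ A.mulVec z = 0 :=
    projPerp_orth A S' _
  have ecol : col A j = A.mulVec (Pi.single j 1) := by ext i; simp [col]
  have x0 : ∀ i ∉ S, x i = 0 := by
    intro i hi; rw [← hS] at hi; simpa [vsupp] using hi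
  have hcard : ∀ w : Fin n → ℝ, (∀ i, i ∉ S → i ≠ j → w i = 0) → (vsupp w).card ≤ K + 1 := by
    intro w hw
    have : vsupp w ⊆ insert j S := by
      intro i hi
      simp only [vsupp, mem_filter, mem_univ, true_and] at hi
      by_contra hc
      simp only [mem_insert, not_or] at hc
      exact hi (hw i hc.2 hc.1)
    refine (Finset.card_le_card this).trans ?_
    refine (Finset.card_insert_le _ _).trans (by omega)
  have hd : dot r (col A j) = r ⬝ᵥ p := by
    rw [e2, dotProduct_sub, or z2 hz2, sub_zero]; rfl
  -- energy of vectors off S'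
  set X2 := rsq x (S \ S') with hX2
  have hX2pos : 0 < X2 := by
    obtain ⟨i, hi, hi'⟩ := Finset.exists_of_ssubset hS'
    apply Finset.sum_pos
    · intro k hk
      have : k ∈ vsupp x := by rw [hS]; exact (mem_sdiff.1 hk).1
      have : x k ≠ 0 := by simpa [vsupp] using this
      positivity
    · exact ⟨i, by simp [hi, hi']⟩
  let w : ℝ → ℝ → Fin n → ℝ := fun α β i =>
    if i ∈ S \ S' then α * x i else if i = j then β else 0
  have hwsum : ∀ α β, ∑ i, w α β i ^ 2 = α^2 * X2 + β^2 := by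
    intro α β
    have : ∀ i, w α β i ^ 2 = (if i ∈ S \ S' then α^2 * x i ^ 2 else 0) + (if i = j then β^2 else 0) := by
      intro i
      by_cases h : i ∈ S \ S'
      · have : i ≠ j := by rintro rfl; exact hj (mem_sdiff.1 h).1
        simp only [w, if_pos h, if_neg this]; ring
      · by_cases h' : i = j
        · simp only [w, if_neg h, if_pos h']; ring
        · simp only [w, if_neg h, if_neg h']; ring
    simp_rw [this, Finset.sum_add_distrib]
    rw [Finset.sum_ite_mem, Finset.univ_inter, ← Finset.mul_sum]
    simp [hX2, rsq]
  -- the quadratic form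
  have hexp : ∀ α β : ℝ, nsq (α • r + β • p) = α^2 * nsq r + 2 * (α * β) * (r ⬝ᵥ p) + β^2 * nsq p := by
    intro α β
    simp only [nsq_eq, add_dotProduct, dotProduct_add, smul_dotProduct, dotProduct_smul, smul_eq_mul]
    rw [dotProduct_comm p r]; ring
  have lower : ∀ α β : ℝ, (1 - δ) * (α^2 * X2 + β^2) ≤ nsq (α • r + β • p) := by
    intro α β
    let y : Fin n → ℝ := α • (x - z1) + β • (Pi.single j 1 - z2)
    have ey : A.mulVec y = α • r + β • p := by
      simp only [y, Matrix.mulVec_add, Matrix.mulVec_smul, Matrix.mulVec_sub, e1, e2, ecol]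
    have h1 := (hRIP y (hcard y (by
      intro i hi hij
      have : i ∉ S' := fun h => hi (hS'.1 h)
      simp [y, x0 i hi, hz1 i this, hz2 i this, hij]))).1
    rw [ey] at h1
    refine le_trans ?_ h1
    apply mul_le_mul_of_nonneg_left _ (by linarith)
    rw [← hwsum]
    apply Finset.sum_le_sum
    intro i _
    by_cases hi : i ∈ S'
    · have : w α β i = 0 := by
        have : i ≠ j := by rintro rfl; exact hjS' hi
        simp [w, hi, this]
      rw [this]; nlinarith [sq_nonneg (y i)]
    · have : w α β i = y i := by
        by_cases h : i ∈ S
        · have : i ≠ j := by rintro rfl; exact hj h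
          simp [w, y, h, hi, this, hz1 i hi, hz2 i hi]
        · by_cases h' : i = j
          · subst h'
            simp [w, y, h, hz1 i hi, hz2 i hi, x0 i h]
          · simp [w, y, h, h', hz1 i hi, hz2 i hi, x0 i h]
      rw [this]
  have upper : ∀ α β : ℝ, nsq (α • r + β • p) ≤ (1 + δ) * (α^2 * X2 + β^2) := by
    intro α β
    let y : Fin n → ℝ := α • (x - z1) + β • (Pi.single j 1 - z2)
    have ey : A.mulVec y = α • r + β • p := by
      simp only [y, Matrix.mulVec_add, Matrix.mulVec_smul, Matrix.mulVec_sub, e1, e2, ecol]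
    have h1 := (hRIP (w α β) (hcard _ (by
      intro i hi hij
      simp [w, hi, hij]))).2
    rw [hwsum] at h1
    refine le_trans ?_ h1
    have hz : ∀ i ∉ S', (w α β - y) i = 0 := by
      intro i hi
      by_cases h : i ∈ S
      · have : i ≠ j := by rintro rfl; exact hj h
        simp [w, y, h, hi, this, hz1 i hi, hz2 i hi]
      · by_cases h' : i = j
        · subst h'
          simp [w, y, h, hz1 i hi, hz2 i hi, x0 i h]
        · simp [w, y, h, h', hz1 i hi, hz2 i hi, x0 i h]
    have ew : A.mulVec (w α β) = (α • r + β • p) + A.mulVec (w α β - y) := by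
      rw [Matrix.mulVec_sub, ey]; abel
    change _ ≤ nsq (A.mulVec (w α β))
    rw [ew]
    have hn : 0 ≤ nsq (A.mulVec (w α β - y)) := Finset.sum_nonneg (fun i _ => sq_nonneg _)
    have ho : (α • r + β • p) ⬝ᵥ A.mulVec (w α β - y) = 0 := by
      rw [add_dotProduct, smul_dotProduct, smul_dotProduct, or _ hz, op _ hz]; simp
    rw [nsq_eq] at hn
    generalize α • r + β • p = V at ho ⊢
    rw [nsq_eq, nsq_eq, add_dotProduct, dotProduct_add, dotProduct_add,
      dotProduct_comm (A.mulVec _) V, ho]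
    linarith
  have hp1 : nsq p ≤ 1 := by
    have : col A j = p + A.mulVec z2 := by rw [e2]; abel
    have h := hcols j
    have hn : 0 ≤ nsq (A.mulVec z2) := Finset.sum_nonneg (fun i _ => sq_nonneg _)
    rw [this, nsq_eq, add_dotProduct, dotProduct_add, dotProduct_add,
      dotProduct_comm (A.mulVec _) p, op _ hz2, ← nsq_eq, ← nsq_eq] at h
    linarith
  set P := nsq p with hP
  have hp0 : 1 - δ ≤ P := by
    have := lower 0 1
    rw [hexp] at this; nlinarith
  set X := Real.sqrt X2 with hX
  have hXpos : 0 < X := Real.sqrt_pos.2 hX2pos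
  have hXX : X2 = X^2 := (Real.sq_sqrt hX2pos.le).symm
  obtain ⟨ρ, hρ⟩ : ∃ ρ, nsq r = ρ * X^2 := ⟨nsq r / X^2, by field_simp⟩
  obtain ⟨c, hc⟩ : ∃ c, r ⬝ᵥ p = c * X := ⟨r ⬝ᵥ p / X, by field_simp⟩
  have hq : ∀ a : ℝ, nsq ((a/X) • r + (1:ℝ) • p) = a^2 * ρ + 2 * a * c + P := by
    intro a; rw [hexp, hρ, hc]; field_simp
  have hq2 : ∀ a : ℝ, (a/X)^2 * X2 + 1^2 = a^2 + 1 := by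
    intro a; rw [hXX]; field_simp
  have hρ0 : 1 - δ ≤ ρ := by
    have := lower (1/X) 0
    rw [hexp, hρ, hXX] at this
    have h3 : (1/X)^2 * X^2 = 1 := by field_simp
    have h4 : (1/X)^2 * (ρ * X^2) = ρ := by field_simp
    rw [h3, h4] at this
    linarith
  have f1 : c^2 ≤ (ρ - 1 + δ) * (P - 1 + δ) := by
    apply quad_disc
    intro a
    have := lower (a/X) 1
    rw [hq, hq2] at this; nlinarith
  have f2 : c^2 ≤ (1 + δ - ρ) * (1 + δ - P) := by
    have : (-c)^2 ≤ (1 + δ - ρ) * (1 + δ - P) := by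
      apply quad_disc
      intro a
      have := upper (a/X) 1
      rw [hq, hq2] at this; nlinarith
    simpa using this
  have hfin := aux_real δ (1 - P) ρ c hδ0 hδ (by linarith) (by linarith) hρ0
    (by convert f1 using 2; ring) (by convert f2 using 2; ring)
  have hPpos : 0 < P := by linarith
  obtain ⟨q, hqdef⟩ : ∃ q, q = Real.sqrt P := ⟨_, rfl⟩
  have hqpos : 0 < q := by rw [hqdef]; exact Real.sqrt_pos.2 hPpos
  have hqq : P = q^2 := by rw [hqdef]; exact (Real.sq_sqrt hPpos.le).symm
  have hρpos : 0 ≤ ρ := by linarith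
  have habs : 2 * |c| ≤ q * (1 + P) * δ * ρ := by
    have : |2 * c| ≤ q * (1 + P) * δ * ρ := by
      apply abs_le_of_sq_le_sq _ (by positivity)
      have : (q * (1 + P) * δ * ρ)^2 = P * (1+P)^2 * δ^2 * ρ^2 := by
        conv_rhs => rw [hqq]
        rw [hqq]; ring
      rw [this]; nlinarith
    rwa [abs_mul, abs_two] at this
  have ht' : t = X * |c * X| / q := by
    rw [ht, hd, hc, hqdef]; rfl
  rw [ht', hρ, abs_mul, abs_of_pos hXpos, ← mul_div_assoc, div_le_iff₀ hqpos]
  have := mul_le_mul_of_nonneg_left habs (sq_nonneg X)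
  nlinarith
end
end

section
/- Fix an integer K ≥ 1. Let x ∈ ℝ^{K+1} be the vector with x_1 = 0 and x_i = 1 for 2 ≤ i ≤ K+1, and let A ∈ ℝ^{(K+1)×(K+1)} be the matrix whose first column is (√((K−1)/K), 1/K, 1/K, …, 1/K)ᵀ and whose j-th column for 2 ≤ j ≤ K+1 is the standard basis vector e_j. Then: (a) every column of A has unit ℓ₂-norm; (b) A x = x; and (c) |⟨A x, a_1⟩| = 1 = (1/√K) · ‖A x‖₂² / ‖x‖₂. In particular, the bound max_{j ∉ supp(x)} |⟨r⁰, a_j⟩| / ‖P_∅^⊥ a_j‖₂ ≤ δ_{K+1} ‖r⁰‖₂² / ‖x‖₂ with r⁰ = A x and δ_{K+1} = 1/√K is attained with equality for this pair (A, x). -/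
open Finset

noncomputable section

theorem aux_projPerp {m n : ℕ} (A : Matrix (Fin m) (Fin n) ℝ) (v : Fin m → ℝ) :
    projPerp A ∅ v = v := by
  have h : colSpan A ∅ = ⊥ := by simp [colSpan]
  unfold projPerp
  have h2 : ∀ w : EuclideanSpace ℝ (Fin m),
      ((Submodule.orthogonalProjectionOnto (colSpan A ∅) w : colSpan A ∅) :
        EuclideanSpace ℝ (Fin m)) = 0 := by
    intro w
    have := (Submodule.orthogonalProjectionOnto (colSpan A ∅) w).2
    exact (Submodule.mem_bot ℝ).mp (h.le this)
  rw [h2]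
  ext i
  simp

/-- tightness example for the bound of Lemma 4 of the paper. -/
theorem stmt5 (K : ℕ) (hK : 1 ≤ K)
    (x : Fin (K + 1) → ℝ) (hx : x = fun i => if i = 0 then 0 else 1)
    (A : Matrix (Fin (K + 1)) (Fin (K + 1)) ℝ)
    (hA : A = fun i j =>
      if j = 0 then (if i = 0 then Real.sqrt (((K : ℝ) - 1) / K) else 1 / K)
      else if i = j then 1 else 0) :
    (∀ j, nsq (col A j) = 1) ∧
    A.mulVec x = x ∧
    |dot (A.mulVec x) (col A 0)| = 1 ∧
    (1 : ℝ) = (1 / Real.sqrt K) * nsq (A.mulVec x) / _root_.enorm x ∧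
    (∀ j, j ∉ vsupp x →
      |dot (A.mulVec x) (col A j)| / _root_.enorm (projPerp A ∅ (col A j)) ≤
        (1 / Real.sqrt K) * nsq (A.mulVec x) / _root_.enorm x) ∧
    (∃ j, j ∉ vsupp x ∧
      |dot (A.mulVec x) (col A j)| / _root_.enorm (projPerp A ∅ (col A j)) =
        (1 / Real.sqrt K) * nsq (A.mulVec x) / _root_.enorm x) := by
  have hK0 : (0 : ℝ) < K := by exact_mod_cast hK
  have hK1 : (1 : ℝ) ≤ K := by exact_mod_cast hK
  have hs : Real.sqrt K * Real.sqrt K = K := Real.mul_self_sqrt hK0.le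
  have hsp : 0 < Real.sqrt K := Real.sqrt_pos.mpr hK0
  have h1 : ∀ j, nsq (col A j) = 1 := by
    intro j
    subst hA
    by_cases hj : j = 0
    · subst hj
      have : (0 : ℝ) ≤ ((K : ℝ) - 1) / K := div_nonneg (by linarith) hK0.le
      simp only [nsq, col, if_true, Fin.sum_univ_succ, Fin.succ_ne_zero, if_false,
        Real.sq_sqrt this, Finset.sum_const, Finset.card_univ, Fintype.card_fin, nsmul_eq_mul]
      field_simp
      ring
    · simp [nsq, col, hj]
  have h2 : A.mulVec x = x := by
    subst hA hx
    ext i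
    simp only [Matrix.mulVec, dotProduct]
    rw [Finset.sum_eq_single i]
    · by_cases hi : i = 0 <;> simp [hi]
    · intro j _ hj
      by_cases h0 : j = 0
      · simp [h0]
      · simp [h0, Ne.symm hj]
    · simp
  have h3 : |dot (A.mulVec x) (col A 0)| = 1 := by
    rw [h2]
    subst hA hx
    simp only [dot, col, if_true, Fin.sum_univ_succ, Fin.succ_ne_zero, if_false,
      Finset.sum_const, Finset.card_univ, Fintype.card_fin, nsmul_eq_mul]
    rw [show (0 * √(((K : ℝ) - 1) / K) + K * (1 * (1 / K)) : ℝ) = 1 by field_simp; ring]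
    simp
  have hn : nsq x = K := by
    subst hx
    simp [nsq, Fin.sum_univ_succ, Fin.succ_ne_zero]
  have h4 : (1 : ℝ) = (1 / Real.sqrt K) * nsq (A.mulVec x) / _root_.enorm x := by
    rw [h2, _root_.enorm, hn]
    field_simp
    nlinarith
  have h5 : |dot (A.mulVec x) (col A 0)| / _root_.enorm (projPerp A ∅ (col A 0)) =
        (1 / Real.sqrt K) * nsq (A.mulVec x) / _root_.enorm x := by
    rw [← h4, h3, aux_projPerp, _root_.enorm, h1]
    simp
  refine ⟨h1, h2, h3, h4, ?_, 0, ?_, h5⟩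
  · intro j hj
    have : j = 0 := by
      subst hx
      simpa [vsupp] using hj
    subst this
    exact h5.le
  · subst hx
    simp [vsupp]
end
end

section
/- Let A ∈ ℝ^{m×n} have unit ℓ₂-norm columns and satisfy the RIP of order K+1 with constant δ ≤ 1/2. Let x ∈ ℝ^n be K-sparse with support S = supp(x), let S' be a proper subset of S, and set r = P_{S'}^⊥ A x. Then for every j ∈ {1,…,n} \ S, |⟨r, a_j⟩| ≤ ‖r‖₂² / (2 ‖x_{S\S'}‖₂). -/
open Finset

noncomputable section

theorem colSpan_repr {m n : ℕ} (A : Matrix (Fin m) (Fin n) ℝ) (J : Finset (Fin n))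
    (v : EuclideanSpace ℝ (Fin m)) (hv : v ∈ colSpan A J) :
    ∃ w : Fin n → ℝ, (∀ i, i ∉ J → w i = 0) ∧ ∀ i, v i = A.mulVec w i := by
  unfold colSpan at hv
  induction hv using Submodule.span_induction with
  | mem v h =>
    obtain ⟨k, hk, rfl⟩ := h
    refine ⟨Pi.single k 1, ?_, ?_⟩
    · intro i hi
      have : i ≠ k := by
        rintro rfl
        exact hi (by simpa using hk)
      simp [this]
    · intro i
      simp [col]
  | zero => exact ⟨0, by simp, by simp⟩
  | add u v _ _ hu hv =>
    obtain ⟨a, ha, ha'⟩ := hu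
    obtain ⟨b, hb, hb'⟩ := hv
    refine ⟨a + b, ?_, ?_⟩
    · intro i hi
      simp [ha i hi, hb i hi]
    · intro i
      simp [Matrix.mulVec_add, ha', hb']
  | smul c v _ hv =>
    obtain ⟨a, ha, ha'⟩ := hv
    refine ⟨c • a, ?_, ?_⟩
    · intro i hi
      simp [ha i hi]
    · intro i
      simp [Matrix.mulVec_smul, ha']

/-- under unit-norm columns and RIP of order `K+1` with `δ ≤ 1/2`,
for every `j ∉ S`, `|⟨r, a_j⟩| ≤ ‖r‖₂² / (2‖x_{S\S'}‖₂)`. -/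
theorem stmt6 {m n K : ℕ} (A : Matrix (Fin m) (Fin n) ℝ) (δ : ℝ)
    (hδ0 : 0 ≤ δ) (hδ : δ ≤ 1 / 2)
    (hcols : ∀ j, nsq (col A j) = 1)
    (hRIP : RIP A (K + 1) δ)
    (x : Fin n → ℝ) (S : Finset (Fin n)) (hS : vsupp x = S) (hK : S.card ≤ K)
    (S' : Finset (Fin n)) (hS' : S' ⊂ S)
    (r : Fin m → ℝ) (hr : r = projPerp A S' (A.mulVec x))
    (j : Fin n) (hj : j ∉ S) :
    |dot r (col A j)| ≤ nsq r / (2 * rnorm x (S \ S')) := by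
  obtain ⟨w, hw, hw'⟩ := colSpan_repr A S' _
    (Submodule.orthogonalProjectionOnto (colSpan A S')
      ((WithLp.equiv 2 (Fin m → ℝ)).symm (A.mulVec x))).2
  have hrz : r = A.mulVec (x - w) := by
    rw [hr, Matrix.mulVec_sub]
    unfold projPerp
    congr 1
    funext i
    exact hw' i
  have hx0 : ∀ i, i ∉ S → x i = 0 := by
    intro i hi
    rw [← hS] at hi
    simpa [vsupp] using hi
  have hz0 : ∀ i, i ∉ S → (x - w) i = 0 := by
    intro i hi
    simp [hx0 i hi, hw i (fun h => hi (hS'.1 h))]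
  set z := x - w with hz
  have hzN : rsq x (S \ S') ≤ ∑ i, z i ^ 2 := by
    unfold rsq
    calc ∑ i ∈ S \ S', x i ^ 2 = ∑ i ∈ S \ S', z i ^ 2 := by
          refine Finset.sum_congr rfl fun i hi => ?_
          simp [hz, hw i (Finset.mem_sdiff.1 hi).2]
      _ ≤ _ := Finset.sum_le_univ_sum_of_nonneg fun i => sq_nonneg _
  have hpos : 0 < rsq x (S \ S') := by
    obtain ⟨k, hk, hk'⟩ := Finset.exists_of_ssubset hS'
    refine Finset.sum_pos' (fun i _ => sq_nonneg _) ⟨k, Finset.mem_sdiff.2 ⟨hk, hk'⟩, ?_⟩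
    rw [← hS] at hk
    have : x k ≠ 0 := by simpa [vsupp] using hk
    positivity
  have key : ∀ t : ℝ, (1 / 2) * (rsq x (S \ S') + t ^ 2) ≤
      nsq r + 2 * t * dot r (col A j) + t ^ 2 := by
    intro t
    have hcard : (vsupp (z + Pi.single j t)).card ≤ K + 1 := by
      have hsub : vsupp (z + Pi.single j t) ⊆ insert j S := by
        intro i hi
        by_contra hc
        simp only [Finset.mem_insert, not_or] at hc
        have h0 := hz0 i hc.2
        have : (z + Pi.single j t : Fin n → ℝ) i = 0 := by simp [h0, hc.1]
        simp only [vsupp, Finset.mem_filter] at hi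
        exact hi.2 this
      calc _ ≤ (insert j S).card := Finset.card_le_card hsub
        _ ≤ S.card + 1 := Finset.card_insert_le _ _
        _ ≤ K + 1 := by omega
    have h := (hRIP _ hcard).1
    have e1 : ∑ i, (z + Pi.single j t : Fin n → ℝ) i ^ 2 = (∑ i, z i ^ 2) + t ^ 2 := by
      have : ∀ i, (z + Pi.single j t : Fin n → ℝ) i ^ 2 = z i ^ 2 + (if i = j then t ^ 2 else 0) := by
        intro i
        by_cases hi : i = j
        · subst hi
          simp [hz0 i hj]
        · simp [hi]
      simp only [this, Finset.sum_add_distrib]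
      simp
    have e2 : ∑ i, (A.mulVec (z + Pi.single j t)) i ^ 2 =
        nsq r + 2 * t * dot r (col A j) + t ^ 2 := by
      have hm : ∀ i, (A.mulVec (z + Pi.single j t)) i = r i + t * col A j i := by
        intro i
        rw [Matrix.mulVec_add, hrz]
        simp [col, mul_comm]
      have hc : t ^ 2 = t ^ 2 * nsq (col A j) := by rw [hcols j, mul_one]
      rw [hc]
      simp only [hm, nsq, dot, Finset.mul_sum, ← Finset.sum_add_distrib]
      refine Finset.sum_congr rfl fun i _ => ?_
      ring
    rw [e1, e2] at h
    have h2 : 0 ≤ (∑ i, z i ^ 2) + t ^ 2 := by positivity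
    nlinarith
  have hN : rnorm x (S \ S') ^ 2 = rsq x (S \ S') := Real.sq_sqrt hpos.le
  have hNpos : 0 < rnorm x (S \ S') := Real.sqrt_pos.2 hpos
  rw [le_div_iff₀ (by positivity)]
  have k1 := key (rnorm x (S \ S'))
  have k2 := key (-rnorm x (S \ S'))
  rw [← hN] at k1 k2
  rcases abs_cases (dot r (col A j)) with ⟨h, _⟩ | ⟨h, _⟩ <;> rw [h] <;> nlinarith
end
end

section
/- Fix an integer K ≥ 4. Let A ∈ ℝ^{m×n} have unit ℓ₂-norm columns and satisfy the RIP of order K+1 with constant δ < 1/√K. Let x ∈ ℝ^n be K-sparse with support S = supp(x), let S' be a proper subset of S, and set r = P_{S'}^⊥ A x. Then for every j ∈ {1,…,n} \ S, |⟨r, a_j⟩| / ‖P_{S'}^⊥ a_j‖₂ < ‖r‖₂² / (√|S \ S'| · ‖x_{S\S'}‖₂). -/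
open Finset

noncomputable section

lemma core_ineq (K s δ p q t : ℝ) (hs : 2 ≤ s) (hK : K = s ^ 2) (h0 : 0 ≤ δ) (hsd : s * δ < 1)
    (h1 : q ≤ (p - 1 + δ) * (t - 1 + δ)) (h2 : q ≤ (1 + δ - p) * (1 + δ - t))
    (hp1 : 1 - δ ≤ p) (hp2 : p ≤ 1 + δ) (ht1 : 1 - δ ≤ t) (ht2 : t ≤ 1) :
    K * q < p ^ 2 * t := by
  have hd : δ < 1 / 2 := by nlinarith
  have ht : 0 < t := by linarith
  have hK4 : 4 ≤ K := by nlinarith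
  have hKd : K * δ ^ 2 < 1 := by
    have : K * δ ^ 2 = (s * δ) * (s * δ) := by rw [hK]; ring
    have h3 : 0 ≤ s * δ := by positivity
    nlinarith
  rcases le_or_gt p 1 with hp | hp
  · have hg : 0 ≤ p - 1 + δ := by linarith
    have e1 : t - 1 + δ ≤ δ * t := by nlinarith
    have e2 : q ≤ (p - 1 + δ) * (δ * t) := h1.trans (mul_le_mul_of_nonneg_left e1 hg)
    have e3 : K * δ * (p - 1 + δ) < p ^ 2 := by
      have a1 : K * δ * (p - 1 + δ) = (s * δ) * (s * (p - 1 + δ)) := by rw [hK]; ring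
      have a2 : 0 ≤ s * (p - 1 + δ) := by positivity
      have a3 : (s * δ) * (s * (p - 1 + δ)) ≤ s * (p - 1 + δ) := by nlinarith
      have a4 : 0 ≤ (1 - p) * (s - 1 - p) := mul_nonneg (by linarith) (by linarith)
      nlinarith
    calc K * q ≤ K * ((p - 1 + δ) * (δ * t)) := mul_le_mul_of_nonneg_left e2 (by linarith)
      _ = (K * δ * (p - 1 + δ)) * t := by ring
      _ < p ^ 2 * t := mul_lt_mul_of_pos_right e3 ht
  · obtain ⟨ε, rfl⟩ : ∃ ε, p = 1 + ε := ⟨p - 1, by ring⟩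
    have he : 0 < ε := by linarith
    have hed : ε ≤ δ := by linarith
    have b1 := mul_le_mul_of_nonneg_left h1 (mul_nonneg (sub_nonneg.2 hed) (by linarith : 0 ≤ 1 + δ))
    have b2 := mul_le_mul_of_nonneg_left h2
      (mul_nonneg (by linarith : 0 ≤ δ + ε) (by linarith : 0 ≤ 1 - δ))
    have b3 : (2 * δ) * (q * (1 - ε)) ≤ (2 * δ) * ((δ ^ 2 - ε ^ 2) * t) := by nlinarith
    have b4 : q * (1 - ε) ≤ (δ ^ 2 - ε ^ 2) * t := le_of_mul_le_mul_left b3 (by linarith)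
    have b5 : K * (δ ^ 2 - ε ^ 2) < (1 + ε) ^ 2 * (1 - ε) := by
      have : 4 * ε ^ 2 ≤ K * ε ^ 2 := mul_le_mul_of_nonneg_right hK4 (sq_nonneg _)
      have : ε ^ 3 ≤ ε := by
        have : ε ^ 2 ≤ 1 := by nlinarith
        nlinarith
      nlinarith [sq_nonneg ε]
    have b6 : (1 - ε) * (K * q) < (1 - ε) * ((1 + ε) ^ 2 * t) := by
      calc (1 - ε) * (K * q) = K * (q * (1 - ε)) := by ring
        _ ≤ K * ((δ ^ 2 - ε ^ 2) * t) := mul_le_mul_of_nonneg_left b4 (by linarith)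
        _ = (K * (δ ^ 2 - ε ^ 2)) * t := by ring
        _ < ((1 + ε) ^ 2 * (1 - ε)) * t := mul_lt_mul_of_pos_right b5 ht
        _ = _ := by ring
    exact lt_of_mul_lt_mul_left b6 (by linarith)

lemma mulVec_eq_sum {m n : ℕ} (A : Matrix (Fin m) (Fin n) ℝ) (J : Finset (Fin n))
    (e : Fin n → ℝ) (he : ∀ i, i ∉ J → e i = 0) :
    ∑ i ∈ J, e i • (WithLp.equiv 2 (Fin m → ℝ)).symm (col A i)
      = (WithLp.equiv 2 (Fin m → ℝ)).symm (A.mulVec e) := by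
  rw [Finset.sum_subset (Finset.subset_univ J) (by intro i _ hi; rw [he i hi, zero_smul])]
  ext k
  simp [Matrix.mulVec, dotProduct, col, mul_comm]

lemma projPerp_spec {m n : ℕ} (A : Matrix (Fin m) (Fin n) ℝ) (J : Finset (Fin n))
    (v : Fin m → ℝ) : ∃ c : Fin n → ℝ, (∀ i, i ∉ J → c i = 0) ∧
      projPerp A J v = v - A.mulVec c ∧
      ∀ e : Fin n → ℝ, (∀ i, i ∉ J → e i = 0) → dot (projPerp A J v) (A.mulVec e) = 0 := by
  classical
  have hmem := (Submodule.orthogonalProjectionOnto (colSpan A J)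
    ((WithLp.equiv 2 (Fin m → ℝ)).symm v)).2
  unfold colSpan at hmem
  rw [Submodule.mem_span_image_finset_iff_exists_fun'] at hmem
  obtain ⟨c, hc⟩ := hmem
  refine ⟨fun i => if i ∈ J then c i else 0, fun i hi => by simp [hi], ?_, ?_⟩
  · have h1 := mulVec_eq_sum A J (fun i => if i ∈ J then c i else 0) (fun i hi => by simp [hi])
    have h2 : ∑ i ∈ J, (if i ∈ J then c i else 0) • (WithLp.equiv 2 (Fin m → ℝ)).symm (col A i)
        = ∑ i ∈ J, c i • (WithLp.equiv 2 (Fin m → ℝ)).symm (col A i) :=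
      Finset.sum_congr rfl (fun i hi => by simp [hi])
    rw [h2, hc] at h1
    unfold projPerp
    unfold colSpan
    rw [h1]
    simp
  · intro e he
    have hw : (WithLp.equiv 2 (Fin m → ℝ)).symm (A.mulVec e) ∈ colSpan A J := by
      unfold colSpan
      rw [Submodule.mem_span_image_finset_iff_exists_fun']
      exact ⟨e, mulVec_eq_sum A J e he⟩
    have := Submodule.starProjection_inner_eq_zero (K := colSpan A J)
      ((WithLp.equiv 2 (Fin m → ℝ)).symm v) _ hw
    rw [PiLp.inner_apply] at this
    rw [← this]
    unfold dot projPerp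
    refine Finset.sum_congr rfl (fun i _ => ?_)
    simp [mul_comm]

lemma nsq_comb {m : ℕ} (u v : Fin m → ℝ) (a b : ℝ) :
    nsq (a • u + b • v) = a ^ 2 * nsq u + 2 * a * b * dot u v + b ^ 2 * nsq v := by
  simp only [nsq, dot, Finset.mul_sum, ← Finset.sum_add_distrib]
  refine Finset.sum_congr rfl (fun i _ => ?_)
  simp; ring

lemma nsq_nonneg {m : ℕ} (u : Fin m → ℝ) : 0 ≤ nsq u := Finset.sum_nonneg fun _ _ => sq_nonneg _

lemma dot_comb {m : ℕ} (u v w : Fin m → ℝ) (a b : ℝ) :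
    dot (a • u + b • v) w = a * dot u w + b * dot v w := by
  simp only [dot, Finset.mul_sum, ← Finset.sum_add_distrib]
  refine Finset.sum_congr rfl (fun i _ => ?_)
  simp; ring

lemma rip_sum {n : ℕ} (S T : Finset (Fin n)) (x z : Fin n → ℝ) (j : Fin n) (a b : ℝ)
    (hTS : T ⊆ S) (hj : j ∉ S) (hzT : ∀ i ∈ T, z i = a * x i) (hzj : z j = b) :
    a ^ 2 * rsq x T + b ^ 2 ≤ ∑ i, z i ^ 2 ∧
    ((∀ i, i ∉ insert j T → z i = 0) → ∑ i, z i ^ 2 = a ^ 2 * rsq x T + b ^ 2) := by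
  have hjT : j ∉ T := fun h => hj (hTS h)
  have h1 : ∑ i ∈ insert j T, z i ^ 2 = a ^ 2 * rsq x T + b ^ 2 := by
    rw [Finset.sum_insert hjT, hzj, rsq, Finset.mul_sum, add_comm]
    congr 1
    exact Finset.sum_congr rfl fun i hi => by rw [hzT i hi]; ring
  constructor
  · rw [← h1]
    exact Finset.sum_le_sum_of_subset_of_nonneg (Finset.subset_univ _) fun _ _ _ => sq_nonneg _
  · intro h
    rw [← h1]
    exact (Finset.sum_subset (Finset.subset_univ _) fun i _ hi => by rw [h i hi]; ring).symm

/-- for `K ≥ 4`, unit-norm columns and RIP of order `K+1` with `δ < 1/√K`,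
for every `j ∉ S`, `|⟨r, a_j⟩| / ‖P_{S'}^⊥ a_j‖₂ < ‖r‖₂² / (√|S\S'| ‖x_{S\S'}‖₂)`. -/
theorem stmt7 {m n K : ℕ} (hK : 4 ≤ K) (A : Matrix (Fin m) (Fin n) ℝ) (δ : ℝ)
    (hδ0 : 0 ≤ δ) (hδ : δ < 1 / Real.sqrt K)
    (hcols : ∀ j, nsq (col A j) = 1)
    (hRIP : RIP A (K + 1) δ)
    (x : Fin n → ℝ) (S : Finset (Fin n)) (hS : vsupp x = S) (hKs : S.card ≤ K)
    (S' : Finset (Fin n)) (hS' : S' ⊂ S)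
    (r : Fin m → ℝ) (hr : r = projPerp A S' (A.mulVec x))
    (j : Fin n) (hj : j ∉ S) :
    |dot r (col A j)| / _root_.enorm (projPerp A S' (col A j)) <
      nsq r / (Real.sqrt ((S \ S').card) * rnorm x (S \ S')) := by
  classical
  have hx0 : ∀ i, i ∉ S → x i = 0 := by
    intro i hi
    by_contra h
    exact hi (by rw [← hS]; simp [vsupp, h])
  have hx1 : ∀ i ∈ S, x i ≠ 0 := by
    intro i hi
    rw [← hS] at hi
    simpa [vsupp] using hi
  obtain ⟨c, hc0, hcr, hco⟩ := projPerp_spec A S' (A.mulVec x)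
  obtain ⟨d, hd0, hdb, hdo⟩ := projPerp_spec A S' (col A j)
  rw [← hr] at hcr hco
  set β := projPerp A S' (col A j) with hβ
  set T := S \ S' with hT
  have hTS : T ⊆ S := Finset.sdiff_subset
  have hjS' : j ∉ S' := fun h => hj (hS'.1 h)
  have hcolj : col A j = A.mulVec (Pi.single j 1) := by
    ext k; simp [col]
  -- key quadratic form bounds
  have key : ∀ a b : ℝ, (1 - δ) * (a ^ 2 * rsq x T + b ^ 2) ≤ nsq (a • r + b • β) ∧
      nsq (a • r + b • β) ≤ (1 + δ) * (a ^ 2 * rsq x T + b ^ 2) := by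
    intro a b
    have hδ1 : 0 ≤ 1 - δ := by
      have h2 : (1:ℝ) ≤ Real.sqrt K := by
        rw [Real.one_le_sqrt]; exact_mod_cast (by omega : 1 ≤ K)
      have : 1 / Real.sqrt K ≤ 1 := by
        rw [div_le_one (by linarith)]; exact h2
      linarith
    set z : Fin n → ℝ := a • (x - c) + b • (Pi.single j 1 - d) with hz
    set e : Fin n → ℝ := fun i => if i ∈ S' then - z i else 0 with he
    have hAz : A.mulVec z = a • r + b • β := by
      rw [hcr, hdb, hz, hcolj]
      simp only [Matrix.mulVec_add, Matrix.mulVec_smul, Matrix.mulVec_sub]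
    have hzT : ∀ i ∈ T, z i = a * x i := by
      intro i hi
      rw [hT, Finset.mem_sdiff] at hi
      have : i ≠ j := fun h => hj (h ▸ hi.1)
      simp [hz, hc0 i hi.2, hd0 i hi.2, this]
    have hzj : z j = b := by
      simp [hz, hc0 j hjS', hd0 j hjS', hx0 j hj]
    have hz0 : ∀ i, i ∉ insert j S → z i = 0 := by
      intro i hi
      simp only [Finset.mem_insert, not_or] at hi
      have h' : i ∉ S' := fun h => hi.2 (hS'.1 h)
      simp [hz, hc0 i h', hd0 i h', hi.1, hx0 i hi.2]
    have hcard : ∀ w : Fin n → ℝ, (∀ i, i ∉ insert j S → w i = 0) → (vsupp w).card ≤ K + 1 := by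
      intro w hw
      have hsub : vsupp w ⊆ insert j S := by
        intro i hi
        by_contra h
        have h3 := hw i h
        simp [vsupp, h3] at hi
      calc (vsupp w).card ≤ (insert j S).card := Finset.card_le_card hsub
        _ ≤ S.card + 1 := Finset.card_insert_le _ _
        _ ≤ K + 1 := by omega
    constructor
    · have h1 := (hRIP z (hcard z hz0)).1
      have h2 := (rip_sum S T x z j a b hTS hj hzT hzj).1
      rw [hAz] at h1
      exact (mul_le_mul_of_nonneg_left h2 hδ1).trans h1
    · have he0 : ∀ i, i ∉ S' → e i = 0 := fun i hi => by simp [he, hi]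
      have hw0 : ∀ i, i ∉ insert j T → (z + e) i = 0 := by
        intro i hi
        simp only [Finset.mem_insert, not_or, hT, Finset.mem_sdiff, not_and, not_not] at hi
        by_cases h : i ∈ S'
        · simp [he, h]
        · have : i ∉ S := fun h' => h (hi.2 h')
          simp [he, h, hz0 i (by simp [hi.1, this])]
      have h1 := (hRIP (z + e) (hcard _ (fun i hi => hw0 i (fun h =>
        hi (Finset.insert_subset_insert j hTS h))))).2
      have h2 := (rip_sum S T x (z + e) j a b hTS hj
        (fun i hi => by
          have : i ∉ S' := (Finset.mem_sdiff.1 hi).2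
          simp [he0 i this, hzT i hi])
        (by simp [he0 j hjS', hzj])).2 hw0
      rw [h2, Matrix.mulVec_add, hAz] at h1
      have h3 := nsq_comb (a • r + b • β) (A.mulVec e) 1 1
      rw [dot_comb, hco e he0, hdo e he0, one_smul, one_smul] at h3
      have h4 := nsq_nonneg (A.mulVec e)
      change nsq (a • r + b • β + A.mulVec e) ≤ _ at h1
      linarith
  have hQ : dot r (col A j) = dot r β := by
    have h1 : col A j = β + A.mulVec d := by rw [hdb]; simp
    have h2 : dot r (β + A.mulVec d) = dot r β + dot r (A.mulVec d) := by
      simp [dot, mul_add, Finset.sum_add_distrib]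
    rw [h1, h2, hco d hd0, add_zero]
  have htle : nsq β ≤ 1 := by
    have h1 : col A j = (1:ℝ) • β + (1:ℝ) • A.mulVec d := by rw [hdb]; simp
    have h2 := nsq_comb β (A.mulVec d) 1 1
    rw [← h1, hcols, hdo d hd0] at h2
    have := nsq_nonneg (A.mulVec d)
    linarith
  have hTne : T.Nonempty := by
    rw [hT, Finset.sdiff_nonempty]; exact hS'.2
  have hX : 0 < rsq x T :=
    Finset.sum_pos (fun i hi => by have := hx1 i (hTS hi); positivity) hTne
  have hkK : (T.card : ℝ) ≤ K := by
    exact_mod_cast (Finset.card_le_card hTS).trans hKs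
  have hk0 : (0:ℝ) < T.card := by exact_mod_cast hTne.card_pos
  set X := rsq x T with hXd
  set R := nsq r
  set Q := dot r β
  set t := nsq β
  have key2 : ∀ a b : ℝ, (1 - δ) * (a ^ 2 * X + b ^ 2) ≤ a ^ 2 * R + 2 * a * b * Q + b ^ 2 * t ∧
      a ^ 2 * R + 2 * a * b * Q + b ^ 2 * t ≤ (1 + δ) * (a ^ 2 * X + b ^ 2) := by
    intro a b
    have := key a b
    rwa [nsq_comb] at this
  have d1 : discrim (R - (1 - δ) * X) (2 * Q) (t - (1 - δ)) ≤ 0 :=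
    discrim_le_zero fun a => by have := (key2 a 1).1; nlinarith
  have d2 : discrim ((1 + δ) * X - R) (-(2 * Q)) (1 + δ - t) ≤ 0 :=
    discrim_le_zero fun a => by have := (key2 a 1).2; nlinarith
  unfold discrim at d1 d2
  have k1 := key2 1 0
  have k2 := key2 0 1
  have hs2 : 2 ≤ Real.sqrt K := by
    apply Real.le_sqrt_of_sq_le
    have : (4:ℝ) ≤ K := by exact_mod_cast hK
    linarith
  have hss : (K:ℝ) = Real.sqrt K ^ 2 := (Real.sq_sqrt (by positivity)).symm
  have hsd : Real.sqrt K * δ < 1 := by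
    rw [lt_div_iff₀ (by linarith)] at hδ; linarith
  have hRX : R = R / X * X := by field_simp
  have hQX : Q ^ 2 = Q ^ 2 / X * X := by field_simp
  have hcore := core_ineq K (Real.sqrt K) δ (R / X) (Q ^ 2 / X) t hs2 hss hδ0 hsd
    (by rw [div_le_iff₀ hX]
        have : (R / X - 1 + δ) * (t - 1 + δ) * X = (R - (1 - δ) * X) * (t - (1 - δ)) := by
          field_simp; ring
        rw [this]; linarith)
    (by rw [div_le_iff₀ hX]
        have : (1 + δ - R / X) * (1 + δ - t) * X = ((1 + δ) * X - R) * (1 + δ - t) := by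
          field_simp
        rw [this]; linarith)
    (by rw [le_div_iff₀ hX]; linarith)
    (by rw [div_le_iff₀ hX]; linarith)
    (by linarith) htle
  have hd1 : δ < 1 := by nlinarith
  have ht : 0 < t := by linarith
  have hR : 0 < R := by
    have : 0 < (1 - δ) * X := mul_pos (by linarith) hX
    linarith
  have hfin : T.card * X * Q ^ 2 < R ^ 2 * t := by
    have h1 : (K:ℝ) * (Q ^ 2 / X) * X ^ 2 < (R / X) ^ 2 * t * X ^ 2 :=
      mul_lt_mul_of_pos_right hcore (by positivity)
    have h2 : (K:ℝ) * (Q ^ 2 / X) * X ^ 2 = K * (X * Q ^ 2) := by field_simp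
    have h3 : (R / X) ^ 2 * t * X ^ 2 = R ^ 2 * t := by field_simp
    have h4 : (T.card : ℝ) * (X * Q ^ 2) ≤ K * (X * Q ^ 2) :=
      mul_le_mul_of_nonneg_right hkK (by positivity)
    rw [h2, h3] at h1
    linarith
  have hEt : _root_.enorm β = Real.sqrt t := rfl
  have hrn : rnorm x T = Real.sqrt X := rfl
  rw [hQ, hEt, hrn, div_lt_div_iff₀ (Real.sqrt_pos.2 ht)
    (mul_pos (Real.sqrt_pos.2 hk0) (Real.sqrt_pos.2 hX))]
  apply lt_of_pow_lt_pow_left₀ 2 (by positivity)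
  rw [mul_pow, mul_pow, mul_pow, sq_abs, Real.sq_sqrt hk0.le, Real.sq_sqrt hX.le, Real.sq_sqrt ht.le]
  linarith
end
end

section
/- Fix an integer K ≥ 4, let δ ∈ [1/√K, 1), and let A ∈ ℝ^{m×(K+1)} be any matrix with AᵀA = G, where G ∈ ℝ^{(K+1)×(K+1)} has unit diagonal, G₁ⱼ = Gⱼ₁ = δ/√K for 2 ≤ j ≤ K+1, and G_{jk} = 0 for distinct j, k ≥ 2 (such A exists since G is positive semidefinite). Then: (a) every column of A has unit ℓ₂-norm; (b) A satisfies the RIP of order K+1 with constant δ, and every δ' ∈ [0,1) with which A satisfies the RIP of order K+1 satisfies δ' ≥ δ; and (c) for the K-sparse vector x ∈ ℝ^{K+1} with x₁ = 0 and x_j = 1 for 2 ≤ j ≤ K+1, and y = A x, one has |⟨y, a_1⟩| = √K·δ, |⟨y, a_j⟩| = 1 for 2 ≤ j ≤ K+1, and √K·δ ≥ 1, so the incorrect index 1 attains the maximum of j ↦ |⟨y, a_j⟩|. -/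
open Finset

noncomputable section

theorem dot_aux {m K : ℕ} (A : Matrix (Fin m) (Fin (K + 1)) ℝ) (c : ℝ)
    (hA : A.transpose * A = fun j l =>
      if j = l then 1 else if j = 0 ∨ l = 0 then c else 0)
    (v : Fin (K + 1) → ℝ) :
    dot (A.mulVec v) (col A 0) = v 0 + c * ∑ i : Fin K, v i.succ ∧
    ∀ j : Fin K, dot (A.mulVec v) (col A j.succ) = c * v 0 + v j.succ := by
  have h1 : ∀ j, dot (A.mulVec v) (col A j) = ((A.transpose * A).mulVec v) j := by
    intro j
    rw [← Matrix.mulVec_mulVec]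
    simp only [dot, col, Matrix.mulVec, dotProduct, Matrix.transpose_apply]
    exact Finset.sum_congr rfl fun i _ => mul_comm _ _
  constructor
  · rw [h1, hA]
    simp only [Matrix.mulVec, dotProduct, Fin.sum_univ_succ]
    rw [Finset.mul_sum]
    congr 1
    · simp
  · intro j
    rw [h1, hA]
    simp only [Matrix.mulVec, dotProduct, Fin.sum_univ_succ]
    simp [Fin.succ_ne_zero]

theorem quad_aux {m K : ℕ} (A : Matrix (Fin m) (Fin (K + 1)) ℝ) (c : ℝ)
    (hA : A.transpose * A = fun j l =>
      if j = l then 1 else if j = 0 ∨ l = 0 then c else 0)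
    (v : Fin (K + 1) → ℝ) :
    ∑ i, (A.mulVec v) i ^ 2 =
      v 0 ^ 2 + ∑ i : Fin K, v i.succ ^ 2 + 2 * c * v 0 * ∑ i : Fin K, v i.succ := by
  have h1 : ∑ i, (A.mulVec v) i ^ 2 = ∑ j, v j * dot (A.mulVec v) (col A j) := by
    simp only [dot, col, Finset.mul_sum]
    rw [Finset.sum_comm]
    refine Finset.sum_congr rfl fun i _ => ?_
    rw [sq]
    conv_lhs => rhs; simp only [Matrix.mulVec, dotProduct]
    rw [Finset.mul_sum]
    exact Finset.sum_congr rfl fun j _ => by ring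
  obtain ⟨h2, h3⟩ := dot_aux A c hA v
  rw [h1, Fin.sum_univ_succ, h2]
  simp only [h3]
  have : ∀ i : Fin K, v i.succ * (c * v 0 + v i.succ) = c * v 0 * v i.succ + v i.succ ^ 2 :=
    fun i => by ring
  simp only [this, Finset.sum_add_distrib, ← Finset.mul_sum]
  ring

/-- the `K ≥ 4` counterexample. -/
theorem stmt15 {m : ℕ} (K : ℕ) (hK : 4 ≤ K) (δ : ℝ)
    (hδ1 : 1 / Real.sqrt K ≤ δ) (hδ2 : δ < 1)
    (A : Matrix (Fin m) (Fin (K + 1)) ℝ)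
    (G : Matrix (Fin (K + 1)) (Fin (K + 1)) ℝ)
    (hG : G = fun j l =>
      if j = l then 1 else if j = 0 ∨ l = 0 then δ / Real.sqrt K else 0)
    (hA : A.transpose * A = G)
    (x : Fin (K + 1) → ℝ) (hx : x = fun j => if j = 0 then 0 else 1)
    (y : Fin m → ℝ) (hy : y = A.mulVec x) :
    (∀ j, nsq (col A j) = 1) ∧
    RIP A (K + 1) δ ∧
    (∀ δ' : ℝ, 0 ≤ δ' → δ' < 1 → RIP A (K + 1) δ' → δ ≤ δ') ∧
    |dot y (col A 0)| = Real.sqrt K * δ ∧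
    (∀ j, j ≠ 0 → |dot y (col A j)| = 1) ∧
    1 ≤ Real.sqrt K * δ ∧
    (∀ j, |dot y (col A j)| ≤ |dot y (col A 0)|) := by
  subst hG
  have hK0 : (0 : ℝ) < K := by
    have : 0 < K := by omega
    exact_mod_cast this
  have hs : 0 < Real.sqrt K := Real.sqrt_pos.2 hK0
  have hss : Real.sqrt K * Real.sqrt K = K := Real.mul_self_sqrt hK0.le
  have hδ0 : 0 < δ := lt_of_lt_of_le (by positivity) hδ1
  have hone : 1 ≤ Real.sqrt K * δ := by
    rw [div_le_iff₀ hs] at hδ1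
    linarith
  have hq := quad_aux A _ hA
  have hd := dot_aux A _ hA
  have hKc : δ / Real.sqrt K * K = Real.sqrt K * δ := by
    rw [div_mul_eq_mul_div, div_eq_iff hs.ne']
    linear_combination (-δ) * hss
  have h0 : |dot y (col A 0)| = Real.sqrt K * δ := by
    rw [hy, (hd x).1, hx]
    simp only [Fin.succ_ne_zero, if_true, if_false, Finset.sum_const, Finset.card_univ,
      Fintype.card_fin, nsmul_eq_mul, mul_one, zero_add]
    rw [hKc, abs_of_pos (by positivity)]
  have hj : ∀ j, j ≠ 0 → |dot y (col A j)| = 1 := by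
    intro j hj
    obtain ⟨i, rfl⟩ := Fin.exists_succ_eq.2 hj
    rw [hy, (hd x).2, hx]
    simp [Fin.succ_ne_zero]
  refine ⟨?_, ?_, ?_, h0, hj, hone, ?_⟩
  · intro j
    have := congrFun (congrFun hA j) j
    simp only [Matrix.mul_apply, Matrix.transpose_apply, if_true] at this
    simp only [nsq, col, sq]
    exact this
  · intro v _
    rw [hq v, Fin.sum_univ_succ]
    have hcs : (∑ i : Fin K, v i.succ) ^ 2 ≤ K * ∑ i : Fin K, v i.succ ^ 2 := by
      have := sq_sum_le_card_mul_sum_sq (s := (Finset.univ : Finset (Fin K)))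
        (f := fun i => v i.succ)
      simpa using this
    generalize (∑ i : Fin K, v i.succ) = S at *
    generalize (∑ i : Fin K, v i.succ ^ 2) = Q at *
    obtain ⟨t, rfl⟩ : ∃ t, S = Real.sqrt K * t := ⟨S / Real.sqrt K, by field_simp⟩
    have ht : t ^ 2 ≤ Q := by
      have : (K : ℝ) * t ^ 2 ≤ K * Q := by
        calc (K : ℝ) * t ^ 2 = (Real.sqrt K * t) ^ 2 := by linear_combination (-t ^ 2) * hss
          _ ≤ _ := hcs
      exact le_of_mul_le_mul_left this hK0
    have e : 2 * (δ / Real.sqrt K) * v 0 * (Real.sqrt K * t) = δ * (2 * v 0 * t) := by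
      field_simp
    rw [e]
    have u1 : δ * (2 * v 0 * t) ≤ δ * (v 0 ^ 2 + Q) :=
      mul_le_mul_of_nonneg_left (by nlinarith [sq_nonneg (v 0 - t)]) hδ0.le
    have u2 : δ * (-(v 0 ^ 2 + Q)) ≤ δ * (2 * v 0 * t) :=
      mul_le_mul_of_nonneg_left (by nlinarith [sq_nonneg (v 0 + t)]) hδ0.le
    constructor <;> nlinarith
  · intro δ' _ _ hR
    have := (hR (Fin.cons (Real.sqrt K) fun _ => 1)
      ((Finset.card_le_univ _).trans (by simp))).2
    rw [hq, Fin.sum_univ_succ] at this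
    simp only [Fin.cons_zero, Fin.cons_succ, one_pow, Finset.sum_const, Finset.card_univ,
      Fintype.card_fin, nsmul_eq_mul, mul_one] at this
    have e : 2 * (δ / Real.sqrt K) * Real.sqrt K * K = 2 * K * δ := by field_simp
    rw [e, Real.sq_sqrt hK0.le] at this
    have : (K : ℝ) * δ ≤ K * δ' := by linarith
    exact le_of_mul_le_mul_left this hK0
  · intro j
    by_cases h : j = 0
    · rw [h]
    · rw [hj j h, h0]; exact hone
end
end
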